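/- Let ν ≥ 1 be an integer and (M_k)_{k∈ℕ} a sequence of positive reals satisfying (M.0), (M.1), (M.2) and (G), with associated function M(r) := sup_{k∈ℕ} log(r^{νk}/M_{νk}). Let (λ_j)_{j≥1} be positive reals with λ_j ≥ λ₁ > 0 for all j and ∑_{j≥1} λ_j^{−p₀} < ∞ for some p₀ ∈ ℕ, and let (a_j)_{j≥1} be nonnegative reals. Then the following are equivalent: (a) for every h > 0 there exists C_h > 0 such that for every m ∈ ℕ: ∑_{j≥1} λ_j^{2m} a_j² ≤ C_h² · h^{2νm} · M_{νm}²; (b) for every L > 0 there exists C_L > 0 such that a_j ≤ C_L · exp(−M(L·λ_j^{1/ν})) for all j ≥ 1. -/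

import Mathlib

/-- The associated function `M(r) = sup_{k ∈ ℕ} log ( r^{νk} / M_{νk} )`. -/
noncomputable def assocM (ν : ℕ) (Mk : ℕ → ℝ) (r : ℝ) : ℝ :=
  ⨆ k : ℕ, Real.log (r ^ (ν * k) / Mk (ν * k))

/-!
Since `exp (M r) = sup_k r^{νk} / M_{νk}`, condition (b) says that for every `L > 0` the quantities
`L^{νm} λ_j^m a_j / M_{νm}` are bounded uniformly in `j` and `m`. Thus (a) is an `ℓ²` bound, and (b)
an `ℓ^∞` bound, on the same sequences `j ↦ λ_j^m a_j`, and `ℓ²` bounds are stronger. Conversely, the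
`ℓ^∞` bound at order `m + p₀` gains the factor `λ_j^{-p₀}`, which is summable; by (M.1) it costs
`M_{ν(m + p₀)} / M_{νm} ≤ const · (H^{νp₀})^{νm}`, a geometric factor absorbed by enlarging `L`.
-/

section SquareSummation

variable {ι : Type*} {f w : ι → ℝ} {B S : ℝ}

theorem abs_le_of_tsum_sq_le_sq (hf : Summable fun j => f j ^ 2) (hB : 0 ≤ B)
    (hsum : ∑' j, f j ^ 2 ≤ B ^ 2) (j : ι) : |f j| ≤ B :=
  abs_le_of_sq_le_sq ((hf.le_tsum j fun i _ => sq_nonneg (f i)).trans hsum) hB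

theorem summable_sq_and_tsum_sq_le_of_abs_le_mul (hw : Summable w) (hw0 : ∀ j, 0 ≤ w j)
    (hS : ∑' j, w j ≤ S) (hfw : ∀ j, |f j| ≤ B * w j) :
    (Summable fun j => f j ^ 2) ∧ ∑' j, f j ^ 2 ≤ (B * S) ^ 2 := by
  have hS0 : 0 ≤ S := (tsum_nonneg hw0).trans hS
  have hwS (j : ι) : w j ≤ S := (hw.le_tsum j fun i _ => hw0 i).trans hS
  have hle (j : ι) : f j ^ 2 ≤ B ^ 2 * S * w j :=
    calc f j ^ 2 ≤ (B * w j) ^ 2 := sq_le_sq.2 ((hfw j).trans (le_abs_self _))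
      _ = B ^ 2 * (w j * w j) := by ring
      _ ≤ B ^ 2 * (S * w j) := by gcongr; exacts [hw0 j, hwS j]
      _ = B ^ 2 * S * w j := by ring
  have hmaj : Summable fun j => B ^ 2 * S * w j := hw.mul_left _
  have hf : Summable fun j => f j ^ 2 := hmaj.of_nonneg_of_le (fun j => sq_nonneg (f j)) hle
  refine ⟨hf, ?_⟩
  calc ∑' j, f j ^ 2 ≤ ∑' j, B ^ 2 * S * w j := hf.tsum_le_tsum hle hmaj
    _ = B ^ 2 * S * ∑' j, w j := tsum_mul_left
    _ ≤ B ^ 2 * S * S := by gcongr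
    _ = (B * S) ^ 2 := by ring

end SquareSummation

section WeightSequence

variable {ν : ℕ} {M : ℕ → ℝ}

theorem apply_add_le_of_apply_succ_le {A H : ℝ} (hA : 0 ≤ A) (hH : 0 ≤ H)
    (hM : ∀ k, M (k + 1) ≤ A * H ^ k * M k) (k q : ℕ) :
    M (k + q) ≤ A ^ q * H ^ q.choose 2 * (H ^ q) ^ k * M k := by
  induction q with
  | zero => simp
  | succ q ih =>
    calc M (k + q + 1) ≤ A * H ^ (k + q) * M (k + q) := hM (k + q)
      _ ≤ A * H ^ (k + q) * (A ^ q * H ^ q.choose 2 * (H ^ q) ^ k * M k) := by gcongr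
      _ = A ^ (q + 1) * H ^ (q + q.choose 2) * (H ^ (q + 1)) ^ k * M k := by ring
      _ = A ^ (q + 1) * H ^ (q + 1).choose 2 * (H ^ (q + 1)) ^ k * M k := by
        rw [Nat.choose_succ_succ' q 1, Nat.choose_one_right]

theorem bddAbove_log_div_of_factorial_le (hMpos : ∀ k, 0 < M k) {C l : ℝ} (hl : 0 < l)
    (hM : ∀ k : ℕ, (k.factorial : ℝ) ≤ C * l ^ k * M k) {r : ℝ} (hr : 0 < r) :
    BddAbove (Set.range fun k => Real.log (r ^ (ν * k) / M (ν * k))) := by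
  have hdiv (n : ℕ) : r ^ n / M n ≤ C * Real.exp (l * r) := by
    rw [div_le_iff₀ (hMpos n)]
    refine le_of_mul_le_mul_left ?_ (pow_pos hl n)
    calc l ^ n * r ^ n = (l * r) ^ n := (mul_pow l r n).symm
      _ ≤ Real.exp (l * r) * n.factorial :=
        (div_le_iff₀ (by positivity)).1 (Real.pow_div_factorial_le_exp _ (by positivity) n)
      _ ≤ Real.exp (l * r) * (C * l ^ n * M n) := by gcongr; exact hM n
      _ = l ^ n * (C * Real.exp (l * r) * M n) := by ring
  refine ⟨Real.log (C * Real.exp (l * r)), Set.forall_mem_range.2 fun k => ?_⟩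
  exact Real.log_le_log (div_pos (pow_pos hr _) (hMpos _)) (hdiv (ν * k))

theorem le_mul_exp_neg_assocM_iff (hMpos : ∀ k, 0 < M k) {r : ℝ} (hr : 0 < r)
    (hbdd : BddAbove (Set.range fun k => Real.log (r ^ (ν * k) / M (ν * k))))
    {a : ℝ} (ha : 0 ≤ a) (C : ℝ) :
    a ≤ C * Real.exp (-assocM ν M r) ↔ ∀ k, r ^ (ν * k) * a ≤ C * M (ν * k) := by
  have hexp_log (k : ℕ) : Real.exp (Real.log (r ^ (ν * k) / M (ν * k))) =
      r ^ (ν * k) / M (ν * k) := Real.exp_log (div_pos (pow_pos hr _) (hMpos _))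
  have hbdd_mul : BddAbove (Set.range fun k => r ^ (ν * k) / M (ν * k) * a) := by
    obtain ⟨b, hb⟩ := hbdd
    refine ⟨Real.exp b * a, Set.forall_mem_range.2 fun k => ?_⟩
    rw [← hexp_log k]
    gcongr
    exact Set.forall_mem_range.1 hb k
  have hexp : Real.exp (assocM ν M r) = ⨆ k, r ^ (ν * k) / M (ν * k) := by
    simpa only [assocM, hexp_log] using
      Real.exp_monotone.map_ciSup_of_continuousAt Real.continuous_exp.continuousAt hbdd
  rw [Real.exp_neg, ← div_eq_mul_inv, le_div_iff₀ (Real.exp_pos _), mul_comm, hexp,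
    Real.iSup_mul_of_nonneg ha, ciSup_le_iff hbdd_mul]
  exact forall_congr' fun k => by rw [div_mul_eq_mul_div, div_le_iff₀ (hMpos _)]

theorem mul_rpow_one_div_natCast_pow_mul (hν : ν ≠ 0) (L : ℝ) {x : ℝ} (hx : 0 ≤ x) (m : ℕ) :
    (L * x ^ (1 / (ν : ℝ))) ^ (ν * m) = L ^ (ν * m) * x ^ m := by
  rw [mul_pow, pow_mul (x ^ (1 / (ν : ℝ))), one_div, Real.rpow_inv_natCast_pow hx hν]

theorem le_mul_exp_neg_assocM_rpow_iff (hν : ν ≠ 0) (hMpos : ∀ k, 0 < M k)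
    (hfin : ∀ r > 0, BddAbove (Set.range fun k => Real.log (r ^ (ν * k) / M (ν * k))))
    {L x a : ℝ} (hL : 0 < L) (hx : 0 < x) (ha : 0 ≤ a) (C : ℝ) :
    a ≤ C * Real.exp (-assocM ν M (L * x ^ (1 / (ν : ℝ)))) ↔
      ∀ m, L ^ (ν * m) * x ^ m * a ≤ C * M (ν * m) := by
  have hr : 0 < L * x ^ (1 / (ν : ℝ)) := by positivity
  simp only [le_mul_exp_neg_assocM_iff hMpos hr (hfin _ hr) ha,
    mul_rpow_one_div_natCast_pow_mul hν L hx.le]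

end WeightSequence

section EigenvalueSequence

variable {ι : Type*} {ν : ℕ} {M : ℕ → ℝ} {lam a : ι → ℝ}

theorem le_mul_exp_neg_assocM_of_tsum_le (hν : ν ≠ 0) (hMpos : ∀ k, 0 < M k)
    (hfin : ∀ r > 0, BddAbove (Set.range fun k => Real.log (r ^ (ν * k) / M (ν * k))))
    (hlam : ∀ j, 0 < lam j) (ha : ∀ j, 0 ≤ a j) {C L : ℝ} (hC : 0 ≤ C) (hL : 0 < L)
    (hsum : ∀ m : ℕ, Summable (fun j => lam j ^ (2 * m) * a j ^ 2) ∧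
      ∑' j, lam j ^ (2 * m) * a j ^ 2 ≤ C ^ 2 * L⁻¹ ^ (2 * ν * m) * M (ν * m) ^ 2) (j : ι) :
    a j ≤ C * Real.exp (-assocM ν M (L * lam j ^ (1 / (ν : ℝ)))) := by
  refine (le_mul_exp_neg_assocM_rpow_iff hν hMpos hfin hL (hlam j) (ha j) C).2 fun m => ?_
  have hsq (i : ι) : lam i ^ (2 * m) * a i ^ 2 = (lam i ^ m * a i) ^ 2 := by ring
  have hbound : C ^ 2 * L⁻¹ ^ (2 * ν * m) * M (ν * m) ^ 2 =
      (C * L⁻¹ ^ (ν * m) * M (ν * m)) ^ 2 := by ring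
  obtain ⟨hsummable, hle⟩ := hsum m
  simp only [hsq, hbound] at hsummable hle
  have hM := hMpos (ν * m)
  have hterm : lam j ^ m * a j ≤ C * L⁻¹ ^ (ν * m) * M (ν * m) :=
    (le_abs_self _).trans (abs_le_of_tsum_sq_le_sq hsummable (by positivity) hle j)
  calc L ^ (ν * m) * lam j ^ m * a j = L ^ (ν * m) * (lam j ^ m * a j) := mul_assoc _ _ _
    _ ≤ L ^ (ν * m) * (C * L⁻¹ ^ (ν * m) * M (ν * m)) :=
      mul_le_mul_of_nonneg_left hterm (by positivity)
    _ = C * M (ν * m) := by rw [inv_pow]; field_simp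

theorem pow_mul_le_of_le_mul_exp_neg_assocM (hν : ν ≠ 0) (hMpos : ∀ k, 0 < M k)
    (hfin : ∀ r > 0, BddAbove (Set.range fun k => Real.log (r ^ (ν * k) / M (ν * k))))
    {B C G h x b : ℝ} (hC : 0 ≤ C) (hG : 0 < G) (hh : 0 < h) (hx : 0 < x) (hb : 0 ≤ b) {p : ℕ}
    (hM : ∀ k, M (k + ν * p) ≤ B * G ^ k * M k)
    (hle : b ≤ C * Real.exp (-assocM ν M (G / h * x ^ (1 / (ν : ℝ))))) (m : ℕ) :
    x ^ m * b ≤ C * B * (h / G) ^ (ν * p) * h ^ (ν * m) * M (ν * m) * (1 / x ^ p) := by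
  have hL : 0 < G / h := by positivity
  have hshift := (le_mul_exp_neg_assocM_rpow_iff hν hMpos hfin hL hx hb C).1 hle (m + p)
  rw [mul_add] at hshift
  have hbound := hshift.trans (mul_le_mul_of_nonneg_left (hM (ν * m)) hC)
  rw [mul_one_div, le_div_iff₀ (pow_pos hx p)]
  calc x ^ m * b * x ^ p
      = (h / G) ^ (ν * m + ν * p) * ((G / h) ^ (ν * m + ν * p) * x ^ (m + p) * b) := by
        rw [← inv_div G h, inv_pow, pow_add x]; field_simp
    _ ≤ (h / G) ^ (ν * m + ν * p) * (C * (B * G ^ (ν * m) * M (ν * m))) :=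
        mul_le_mul_of_nonneg_left hbound (by positivity)
    _ = C * B * (h / G) ^ (ν * p) * h ^ (ν * m) * M (ν * m) := by
        rw [pow_add, div_pow h G (ν * m)]; field_simp

theorem summable_and_tsum_le_of_le_mul_exp_neg_assocM (hν : ν ≠ 0) (hMpos : ∀ k, 0 < M k)
    (hfin : ∀ r > 0, BddAbove (Set.range fun k => Real.log (r ^ (ν * k) / M (ν * k))))
    (hlam : ∀ j, 0 < lam j) (ha : ∀ j, 0 ≤ a j) {p : ℕ}
    (hp : Summable fun j => 1 / lam j ^ p) {B C G S h : ℝ} (hC : 0 ≤ C) (hG : 0 < G) (hh : 0 < h)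
    (hS : ∑' j, 1 / lam j ^ p ≤ S) (hM : ∀ k, M (k + ν * p) ≤ B * G ^ k * M k)
    (hle : ∀ j, a j ≤ C * Real.exp (-assocM ν M (G / h * lam j ^ (1 / (ν : ℝ))))) (m : ℕ) :
    Summable (fun j => lam j ^ (2 * m) * a j ^ 2) ∧
      ∑' j, lam j ^ (2 * m) * a j ^ 2 ≤
        (C * B * (h / G) ^ (ν * p) * S) ^ 2 * h ^ (2 * ν * m) * M (ν * m) ^ 2 := by
  have hpointwise (j : ι) : |lam j ^ m * a j| ≤
      C * B * (h / G) ^ (ν * p) * h ^ (ν * m) * M (ν * m) * (1 / lam j ^ p) := by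
    rw [abs_of_nonneg (mul_nonneg (pow_nonneg (hlam j).le m) (ha j))]
    exact pow_mul_le_of_le_mul_exp_neg_assocM hν hMpos hfin hC hG hh (hlam j) (ha j) hM (hle j) m
  convert summable_sq_and_tsum_sq_le_of_abs_le_mul hp
    (fun j => one_div_nonneg.2 (pow_nonneg (hlam j).le p)) hS hpointwise using 4 <;> ring

end EigenvalueSequence

theorem stmt_16_general {ι : Type*} {ν : ℕ} (hν : ν ≠ 0) {M : ℕ → ℝ} (hMpos : ∀ k, 0 < M k)
    {A H : ℝ} (hA : 0 < A) (hH : 0 < H) (hM1 : ∀ k, M (k + 1) ≤ A * H ^ k * M k)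
    (hfin : ∀ r > 0, BddAbove (Set.range fun k => Real.log (r ^ (ν * k) / M (ν * k))))
    {lam a : ι → ℝ} (hlam : ∀ j, 0 < lam j) (ha : ∀ j, 0 ≤ a j)
    {p : ℕ} (hp : Summable fun j => 1 / lam j ^ p) :
    (∀ h : ℝ, 0 < h → ∃ C : ℝ, 0 < C ∧ ∀ m : ℕ,
        Summable (fun j => lam j ^ (2 * m) * a j ^ 2) ∧
        ∑' j, lam j ^ (2 * m) * a j ^ 2 ≤ C ^ 2 * h ^ (2 * ν * m) * M (ν * m) ^ 2) ↔
    (∀ L : ℝ, 0 < L → ∃ C : ℝ, 0 < C ∧ ∀ j,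
        a j ≤ C * Real.exp (-assocM ν M (L * lam j ^ (1 / (ν : ℝ))))) := by
  constructor
  · intro hsum L hL
    obtain ⟨C, hC, hsumC⟩ := hsum L⁻¹ (inv_pos.2 hL)
    exact ⟨C, hC, le_mul_exp_neg_assocM_of_tsum_le hν hMpos hfin hlam ha hC.le hL hsumC⟩
  · intro hdecay h hh
    obtain ⟨C, hC, hle⟩ := hdecay (H ^ (ν * p) / h) (by positivity)
    have hS0 : 0 ≤ ∑' j, 1 / lam j ^ p :=
      tsum_nonneg fun j => one_div_nonneg.2 (pow_nonneg (hlam j).le p)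
    exact ⟨_, by positivity, summable_and_tsum_le_of_le_mul_exp_neg_assocM hν hMpos hfin hlam ha hp
      hC.le (pow_pos hH _) hh (lt_add_one _).le
      (fun k => apply_add_le_of_apply_succ_le hA.le hH.le hM1 k (ν * p)) hle⟩

theorem stmt_16 (ν : ℕ) (hν : 1 ≤ ν) (Mk : ℕ → ℝ) (hMpos : ∀ k, 0 < Mk k)
    (hM0 : Mk 0 = 1)
    (A H : ℝ) (hA : 1 ≤ A) (hH : 1 ≤ H)
    (hM1 : ∀ k : ℕ, Mk (k + 1) ≤ A * H ^ k * Mk k)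
    (hM2 : ∀ k : ℕ, Mk (2 * k) ≤ A * H ^ (2 * k) * Mk k ^ 2)
    (hG : ∃ C₀ > (0 : ℝ), ∃ l > (0 : ℝ), ∀ k : ℕ, (k.factorial : ℝ) ≤ C₀ * l ^ k * Mk k)
    (lam a : ℕ → ℝ) (hlam : ∀ j, 0 < lam j) (hlb : ∀ j, lam 0 ≤ lam j)
    (ha : ∀ j, 0 ≤ a j)
    (p₀ : ℕ) (hp₀ : Summable (fun j => 1 / lam j ^ p₀)) :
    (∀ h : ℝ, 0 < h → ∃ Ch : ℝ, 0 < Ch ∧ ∀ m : ℕ,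
        Summable (fun j => lam j ^ (2 * m) * a j ^ 2) ∧
        (∑' j, lam j ^ (2 * m) * a j ^ 2) ≤ Ch ^ 2 * h ^ (2 * ν * m) * Mk (ν * m) ^ 2) ↔
    (∀ L : ℝ, 0 < L → ∃ CL : ℝ, 0 < CL ∧ ∀ j,
        a j ≤ CL * Real.exp (-(assocM ν Mk (L * lam j ^ (1 / (ν : ℝ)))))) := by
  obtain ⟨C₀, -, l, hl, hfact⟩ := hG
  exact stmt_16_general (Nat.one_le_iff_ne_zero.1 hν) hMpos (by linarith) (by linarith) hM1
    (fun _ => bddAbove_log_div_of_factorial_le hMpos hl hfact) hlam ha hp₀
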